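/- Let A be an integrally closed residuated lattice. If A has a greatest element, or if A has a least element, then A is integral, i.e., a ≤ e for all a ∈ A. (In particular, any residuated lattice with a least element ⊥ has greatest element ⊥/⊥.) -/

import Mathlib

/-- A residuated lattice: a lattice-ordered monoid with left and right residuals,
i.e. `b ≤ a\c ↔ a*b ≤ c ↔ a ≤ c/b`.  `ldiv a c` denotes `a\c` and `rdiv c b` denotes `c/b`. -/
class ResiduatedLattice (α : Type*) extends Lattice α, Monoid α where
  ldiv : α → α → α
  rdiv : α → α → α
  le_ldiv_iff : ∀ a b c : α, b ≤ ldiv a c ↔ a * b ≤ c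
  le_rdiv_iff : ∀ a b c : α, a ≤ rdiv c b ↔ a * b ≤ c

open ResiduatedLattice

namespace ResiduatedLattice

variable {α : Type*} [ResiduatedLattice α] {a b c : α}

theorem le_ldiv_iff_le_rdiv : b ≤ ldiv a c ↔ a ≤ rdiv c b :=
  (le_ldiv_iff a b c).trans (le_rdiv_iff a b c).symm

theorem isTop_ldiv_of_isTop (hc : IsTop c) (a : α) : IsTop (ldiv a c) :=
  fun b ↦ (le_ldiv_iff a b c).2 (hc (a * b))

theorem isTop_rdiv_of_isTop (hc : IsTop c) (b : α) : IsTop (rdiv c b) :=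
  fun a ↦ (le_rdiv_iff a b c).2 (hc (a * b))

theorem isTop_ldiv_of_isBot (ha : IsBot a) (c : α) : IsTop (ldiv a c) :=
  fun b ↦ le_ldiv_iff_le_rdiv.2 (ha (rdiv c b))

theorem isTop_rdiv_of_isBot (hb : IsBot b) (c : α) : IsTop (rdiv c b) :=
  fun a ↦ le_ldiv_iff_le_rdiv.1 (hb (ldiv a c))

theorem isTop_ldiv_self (hc : IsTop c ∨ IsBot c) : IsTop (ldiv c c) :=
  hc.elim (isTop_ldiv_of_isTop · c) (isTop_ldiv_of_isBot · c)

theorem isTop_rdiv_self (hc : IsTop c ∨ IsBot c) : IsTop (rdiv c c) :=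
  hc.elim (isTop_rdiv_of_isTop · c) (isTop_rdiv_of_isBot · c)

end ResiduatedLattice

theorem bounded_integrally_closed_is_integral_general {α : Type*} [ResiduatedLattice α] {c : α}
    (hc : IsTop c ∨ IsBot c) (hself : ldiv c c = 1 ∨ rdiv c c = 1) :
    ∀ a : α, a ≤ 1 := by
  rcases hself with hl | hr
  · exact hl ▸ isTop_ldiv_self hc
  · exact hr ▸ isTop_rdiv_self hc

/-- Any upper- or lower-bounded integrally closed residuated lattice is integral. -/
theorem bounded_integrally_closed_is_integral {α : Type*} [ResiduatedLattice α]
    (hic : ∀ a : α, ldiv a a = 1 ∧ rdiv a a = 1)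
    (hbdd : (∃ t : α, ∀ a : α, a ≤ t) ∨ (∃ b : α, ∀ a : α, b ≤ a)) :
    ∀ a : α, a ≤ 1 := by
  obtain ⟨c, hc⟩ : ∃ c : α, IsTop c ∨ IsBot c := exists_or.2 hbdd
  exact bounded_integrally_closed_is_integral_general hc (.inl (hic c).1)
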